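/- arXiv:2002.04842 — 4 statements merged into one kernel-verified Lean document; each statement's English description precedes it below -/
import Mathlib

section
/- Let (A, α) be a monoidal Hom-bialgebra and let (H, β) be a monoidal Hom-algebra which is a right (A, α)-Hom-module algebra via ◁. Then the vector space A ⊗ H, equipped with the automorphism α ⊗ β, the unit 1_A ⊗ 1_H, and the multiplication (a # h)(b # g) = a·α(b_1) # (β⁻¹(h) ◁ b_2)·g, is a monoidal Hom-algebra (the right Hom-smash product A # H). -/
open TensorProduct

/-! Basic notions of monoidal Hom-algebras, Hom-coalgebras, Hom-bialgebras and
Hom-Hopf algebras over a field `k`, following Caenepeel–Goyvaerts.  All Sweedler-type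
identities are expressed via the tensor-product calculus of Mathlib. -/

/-- A (unital) monoidal Hom-associative algebra `(A, α)`. -/
structure HomAlg (k : Type*) [Field k] (A : Type*) [AddCommGroup A] [Module k A] where
  mul : A →ₗ[k] A →ₗ[k] A
  one : A
  str : A ≃ₗ[k] A
  hom_assoc : ∀ a b c, mul (str a) (mul b c) = mul (mul a b) (str c)
  mul_one : ∀ a, mul a one = str a
  one_mul : ∀ a, mul one a = str a
  str_mul : ∀ a b, str (mul a b) = mul (str a) (str b)
  str_one : str one = one

/-- A (counital) monoidal Hom-coassociative coalgebra `(C, λ)`. -/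
structure HomCoalg (k : Type*) [Field k] (C : Type*) [AddCommGroup C] [Module k C] where
  comul : C →ₗ[k] C ⊗[k] C
  counit : C →ₗ[k] k
  str : C ≃ₗ[k] C
  hom_coassoc : ∀ c,
    TensorProduct.map str.symm.toLinearMap comul (comul c)
      = TensorProduct.assoc k C C C (TensorProduct.map comul str.symm.toLinearMap (comul c))
  counit_comul_right : ∀ c,
    TensorProduct.rid k C (TensorProduct.map LinearMap.id counit (comul c)) = str.symm c
  counit_comul_left : ∀ c,
    TensorProduct.lid k C (TensorProduct.map counit LinearMap.id (comul c)) = str.symm c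
  comul_str : ∀ c, comul (str c) = TensorProduct.map str.toLinearMap str.toLinearMap (comul c)
  counit_str : ∀ c, counit (str c) = counit c

/-- A monoidal Hom-bialgebra `(H, β)`. -/
structure HomBialg (k : Type*) [Field k] (H : Type*) [AddCommGroup H] [Module k H]
    extends HomAlg k H, HomCoalg k H where
  comul_mul : ∀ a b,
    comul (mul a b)
      = TensorProduct.map (TensorProduct.lift mul) (TensorProduct.lift mul)
          (TensorProduct.tensorTensorTensorComm k H H H H (comul a ⊗ₜ[k] comul b))
  comul_one : comul one = one ⊗ₜ[k] one
  counit_mul : ∀ a b, counit (mul a b) = counit a * counit b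
  counit_one : counit one = 1

/-- A monoidal Hom-Hopf algebra `(H, β, S)`. -/
structure HomHopf (k : Type*) [Field k] (H : Type*) [AddCommGroup H] [Module k H]
    extends HomBialg k H where
  S : H →ₗ[k] H
  S_str : ∀ h, str (S h) = S (str h)
  S_mul_left : ∀ h,
    TensorProduct.lift mul (TensorProduct.map S LinearMap.id (comul h)) = counit h • one
  S_mul_right : ∀ h,
    TensorProduct.lift mul (TensorProduct.map LinearMap.id S (comul h)) = counit h • one

section HomDefs

variable {k : Type*} [Field k] {A H M C T : Type*}
  [AddCommGroup A] [Module k A] [AddCommGroup H] [Module k H]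
  [AddCommGroup M] [Module k M] [AddCommGroup C] [Module k C]
  [AddCommGroup T] [Module k T]

/-- `(M, μ)` is a right `(A, α)`-Hom-module via `act`. -/
def IsRightHomModule (AA : HomAlg k A) (μ : M ≃ₗ[k] M) (act : M →ₗ[k] A →ₗ[k] M) : Prop :=
  (∀ m a b, act (act m a) (AA.str b) = act (μ m) (AA.mul a b)) ∧
  (∀ m, act m AA.one = μ m) ∧
  (∀ m a, μ (act m a) = act (μ m) (AA.str a))

/-- The monoidal Hom-algebra `(HM, β)` is a right `(A, α)`-Hom-module algebra via `act`. -/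
def IsRightHomModuleAlg (AA : HomBialg k A) (HM : HomAlg k H)
    (act : H →ₗ[k] A →ₗ[k] H) : Prop :=
  IsRightHomModule AA.toHomAlg HM.str act ∧
  (∀ h g a, act (HM.mul h g) a
      = TensorProduct.lift HM.mul (TensorProduct.map (act h) (act g) (AA.comul a))) ∧
  (∀ a, act HM.one a = AA.counit a • HM.one)

/-- `(M, μ)` is a left `(H, β)`-Hom-module via `act`. -/
def IsLeftHomModule (HHa : HomAlg k H) (μ : M ≃ₗ[k] M) (act : H →ₗ[k] M →ₗ[k] M) : Prop :=
  (∀ h g m, act (HHa.str h) (act g m) = act (HHa.mul h g) (μ m)) ∧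
  (∀ m, act HHa.one m = μ m) ∧
  (∀ h m, μ (act h m) = act (HHa.str h) (μ m))

/-- The monoidal Hom-algebra `(AM, α)` is a left `(H, β)`-Hom-module algebra via `act`. -/
def IsLeftHomModuleAlg (HB : HomBialg k H) (AM : HomAlg k A)
    (act : H →ₗ[k] A →ₗ[k] A) : Prop :=
  IsLeftHomModule HB.toHomAlg AM.str act ∧
  (∀ h a b, act h (AM.mul a b)
      = TensorProduct.lift AM.mul
          (TensorProduct.map (act.flip a) (act.flip b) (HB.comul h))) ∧
  (∀ h, act h AM.one = HB.counit h • AM.one)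

/-- `(M, μ)` is a left `(H, β)`-Hom-comodule via `ρ`. -/
def IsLeftHomComodule (HC : HomCoalg k H) (μ : M ≃ₗ[k] M) (ρ : M →ₗ[k] H ⊗[k] M) : Prop :=
  (∀ m, TensorProduct.map HC.str.symm.toLinearMap ρ (ρ m)
      = TensorProduct.assoc k H H M
          (TensorProduct.map HC.comul μ.symm.toLinearMap (ρ m))) ∧
  (∀ m, ρ (μ m) = TensorProduct.map HC.str.toLinearMap μ.toLinearMap (ρ m)) ∧
  (∀ m, TensorProduct.lid k M (TensorProduct.map HC.counit LinearMap.id (ρ m)) = μ.symm m)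

/-- The monoidal Hom-coalgebra `(CC, λ)` is a left `(H, β)`-Hom-comodule coalgebra via `ρ`. -/
def IsLeftHomComoduleCoalg (HB : HomBialg k H) (CC : HomCoalg k C)
    (ρ : C →ₗ[k] H ⊗[k] C) : Prop :=
  IsLeftHomComodule HB.toHomCoalg CC.str ρ ∧
  (∀ c, TensorProduct.map LinearMap.id CC.comul (ρ c)
      = TensorProduct.map (TensorProduct.lift HB.mul) LinearMap.id
          (TensorProduct.tensorTensorTensorComm k H C H C
            (TensorProduct.map ρ ρ (CC.comul c)))) ∧
  (∀ c, TensorProduct.rid k H (TensorProduct.map LinearMap.id CC.counit (ρ c))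
      = CC.counit c • HB.one)

/-- The monoidal Hom-algebra `(AM, α)` is a left `(H, β)`-Hom-comodule algebra via `ρ`. -/
def IsLeftHomComoduleAlg (HB : HomBialg k H) (AM : HomAlg k A)
    (ρ : A →ₗ[k] H ⊗[k] A) : Prop :=
  IsLeftHomComodule HB.toHomCoalg AM.str ρ ∧
  (∀ a b, ρ (AM.mul a b)
      = TensorProduct.map (TensorProduct.lift HB.mul) (TensorProduct.lift AM.mul)
          (TensorProduct.tensorTensorTensorComm k H A H A (ρ a ⊗ₜ[k] ρ b))) ∧
  ρ AM.one = HB.one ⊗ₜ[k] AM.one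

/-- `(M, μ)` is a right `(C, λ)`-Hom-comodule via `ρ`. -/
def IsRightHomComodule (CC : HomCoalg k C) (μ : M ≃ₗ[k] M) (ρ : M →ₗ[k] M ⊗[k] C) : Prop :=
  (∀ m, TensorProduct.map μ.symm.toLinearMap CC.comul (ρ m)
      = TensorProduct.assoc k M C C
          (TensorProduct.map ρ CC.str.symm.toLinearMap (ρ m))) ∧
  (∀ m, ρ (μ m) = TensorProduct.map μ.toLinearMap CC.str.toLinearMap (ρ m)) ∧
  (∀ m, TensorProduct.rid k M (TensorProduct.map LinearMap.id CC.counit (ρ m)) = μ.symm m)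

/-- The monoidal Hom-coalgebra `(CC, λ)` is a right `(A, α)`-Hom-comodule coalgebra via `ρ`. -/
def IsRightHomComoduleCoalg (AB : HomBialg k A) (CC : HomCoalg k C)
    (ρ : C →ₗ[k] C ⊗[k] A) : Prop :=
  IsRightHomComodule AB.toHomCoalg CC.str ρ ∧
  (∀ c, TensorProduct.map CC.comul LinearMap.id (ρ c)
      = TensorProduct.map LinearMap.id (TensorProduct.lift AB.mul)
          (TensorProduct.tensorTensorTensorComm k C A C A
            (TensorProduct.map ρ ρ (CC.comul c)))) ∧
  (∀ c, TensorProduct.lid k A (TensorProduct.map CC.counit LinearMap.id (ρ c))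
      = CC.counit c • AB.one)

/-- The monoidal Hom-algebra `(MM, μ)` is a right `(A, α)`-Hom-comodule algebra via `ρ`. -/
def IsRightHomComoduleAlg (AB : HomBialg k A) (MM : HomAlg k M)
    (ρ : M →ₗ[k] M ⊗[k] A) : Prop :=
  IsRightHomComodule AB.toHomCoalg MM.str ρ ∧
  (∀ m n, ρ (MM.mul m n)
      = TensorProduct.map (TensorProduct.lift MM.mul) (TensorProduct.lift AB.mul)
          (TensorProduct.tensorTensorTensorComm k M A M A (ρ m ⊗ₜ[k] ρ n))) ∧
  ρ MM.one = MM.one ⊗ₜ[k] AB.one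

/-- A matched copair `(A, H)` of monoidal Hom-bialgebras:
`A` is a left `H`-Hom-comodule algebra via `ρA : A → H ⊗ A`, `H` is a right
`A`-Hom-comodule algebra via `ρH : H → H ⊗ A`, subject to conditions (4.1)–(4.5). -/
def IsMatchedCopair (AB : HomBialg k A) (HB : HomBialg k H)
    (ρA : A →ₗ[k] H ⊗[k] A) (ρH : H →ₗ[k] H ⊗[k] A) : Prop :=
  IsLeftHomComoduleAlg HB AB.toHomAlg ρA ∧
  IsRightHomComoduleAlg AB HB.toHomAlg ρH ∧
  -- (4.1)
  (∀ a, TensorProduct.rid k H (TensorProduct.map LinearMap.id AB.counit (ρA a))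
      = AB.counit a • HB.one) ∧
  -- (4.2)
  (∀ a, TensorProduct.map LinearMap.id AB.comul (ρA a)
      = TensorProduct.map
          (TensorProduct.lift HB.mul ∘ₗ TensorProduct.map LinearMap.id HB.str.toLinearMap)
          ((TensorProduct.map
              (TensorProduct.lift AB.mul ∘ₗ TensorProduct.map AB.str.symm.toLinearMap LinearMap.id)
              LinearMap.id) ∘ₗ (TensorProduct.assoc k A A A).symm.toLinearMap)
          (TensorProduct.tensorTensorTensorComm k H A H (A ⊗[k] A)
            (TensorProduct.map LinearMap.id (TensorProduct.assoc k H A A).toLinearMap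
              (TensorProduct.map LinearMap.id (TensorProduct.map ρH LinearMap.id)
                (TensorProduct.map ρA ρA (AB.comul a)))))) ∧
  -- (4.3)
  (∀ h, TensorProduct.lid k A (TensorProduct.map HB.counit LinearMap.id (ρH h))
      = HB.counit h • AB.one) ∧
  -- (4.4)
  (∀ h, TensorProduct.map HB.comul LinearMap.id (ρH h)
      = TensorProduct.map
          ((TensorProduct.map LinearMap.id
              (TensorProduct.lift HB.mul ∘ₗ TensorProduct.map LinearMap.id HB.str.symm.toLinearMap))
            ∘ₗ (TensorProduct.assoc k H H H).toLinearMap)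
          (TensorProduct.lift AB.mul ∘ₗ TensorProduct.map AB.str.toLinearMap LinearMap.id)
          (TensorProduct.tensorTensorTensorComm k (H ⊗[k] H) A H A
            (TensorProduct.map (TensorProduct.assoc k H H A).symm.toLinearMap LinearMap.id
              (TensorProduct.map (TensorProduct.map LinearMap.id ρA) LinearMap.id
                (TensorProduct.map ρH ρH (HB.comul h)))))) ∧
  -- (4.5)
  (∀ h a, TensorProduct.map (TensorProduct.lift HB.mul) (TensorProduct.lift AB.mul)
        (TensorProduct.tensorTensorTensorComm k H A H A (ρH h ⊗ₜ[k] ρA a))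
      = TensorProduct.map (TensorProduct.lift HB.mul) (TensorProduct.lift AB.mul)
          (TensorProduct.tensorTensorTensorComm k H A H A (ρA a ⊗ₜ[k] ρH h)))

/-- A coquasitriangular structure `ζ` (with convolution inverse `ζi`) on a monoidal
Hom-bialgebra `P`; conditions (5.1)–(5.4). -/
def IsCoquasitriangular (P : HomBialg k T) (ζ ζi : T →ₗ[k] T →ₗ[k] k) : Prop :=
  -- convolution invertibility
  (∀ h g, TensorProduct.lid k k
      (TensorProduct.map (TensorProduct.lift ζ) (TensorProduct.lift ζi)
        (TensorProduct.tensorTensorTensorComm k T T T T (P.comul h ⊗ₜ[k] P.comul g)))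
      = P.counit h * P.counit g) ∧
  (∀ h g, TensorProduct.lid k k
      (TensorProduct.map (TensorProduct.lift ζi) (TensorProduct.lift ζ)
        (TensorProduct.tensorTensorTensorComm k T T T T (P.comul h ⊗ₜ[k] P.comul g)))
      = P.counit h * P.counit g) ∧
  -- (5.1)
  (∀ h g, ζ (P.str h) (P.str g) = ζ h g) ∧
  -- (5.2)
  (∀ h g, TensorProduct.lid k T
      (TensorProduct.map (TensorProduct.lift ζ)
        (TensorProduct.lift P.mul ∘ₗ (TensorProduct.comm k T T).toLinearMap)
        (TensorProduct.tensorTensorTensorComm k T T T T (P.comul h ⊗ₜ[k] P.comul g)))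
      = TensorProduct.rid k T
          (TensorProduct.map (TensorProduct.lift P.mul) (TensorProduct.lift ζ)
            (TensorProduct.tensorTensorTensorComm k T T T T (P.comul h ⊗ₜ[k] P.comul g)))) ∧
  -- (5.3)
  (∀ h g c, ζ (P.str.symm h) (P.mul g c)
      = TensorProduct.lid k k
          (TensorProduct.map (ζ.flip (P.str g)) (ζ.flip (P.str c)) (P.comul h))) ∧
  -- (5.4)
  (∀ h g c, ζ (P.mul h g) (P.str.symm c)
      = TensorProduct.lid k k
          (TensorProduct.map (ζ (P.str h)) (ζ (P.str g))
            ((TensorProduct.comm k T T) (P.comul c))))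

/-- `σ` is a left monoidal Hom-2-cocycle on the monoidal Hom-bialgebra `P`. -/
def IsLeftHom2Cocycle (P : HomBialg k T) (σ : T →ₗ[k] T →ₗ[k] k) : Prop :=
  (∀ h g, σ (P.str h) (P.str g) = σ h g) ∧
  (∀ h g c, TensorProduct.lid k k
      (TensorProduct.map (TensorProduct.lift σ) (σ.flip c ∘ₗ TensorProduct.lift P.mul)
        (TensorProduct.tensorTensorTensorComm k T T T T (P.comul h ⊗ₜ[k] P.comul g)))
      = TensorProduct.lid k k
          (TensorProduct.map (TensorProduct.lift σ) (σ h ∘ₗ TensorProduct.lift P.mul)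
            (TensorProduct.tensorTensorTensorComm k T T T T (P.comul g ⊗ₜ[k] P.comul c))))

/-- `σ` is a right monoidal Hom-2-cocycle on the monoidal Hom-bialgebra `P`. -/
def IsRightHom2Cocycle (P : HomBialg k T) (σ : T →ₗ[k] T →ₗ[k] k) : Prop :=
  (∀ h g, σ (P.str h) (P.str g) = σ h g) ∧
  (∀ h g c, TensorProduct.lid k k
      (TensorProduct.map (σ.flip c ∘ₗ TensorProduct.lift P.mul) (TensorProduct.lift σ)
        (TensorProduct.tensorTensorTensorComm k T T T T (P.comul h ⊗ₜ[k] P.comul g)))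
      = TensorProduct.lid k k
          (TensorProduct.map (σ h ∘ₗ TensorProduct.lift P.mul) (TensorProduct.lift σ)
            (TensorProduct.tensorTensorTensorComm k T T T T (P.comul g ⊗ₜ[k] P.comul c))))

/-- Normality of a 2-cocycle: `σ(1, h) = σ(h, 1) = ε(h)`. -/
def IsNormal2Cocycle (P : HomBialg k T) (σ : T →ₗ[k] T →ₗ[k] k) : Prop :=
  (∀ h, σ P.one h = P.counit h) ∧ (∀ h, σ h P.one = P.counit h)

/-- The left-twisted product `h ·_σ g = σ(h₁, g₁) β(h₂ g₂)`. -/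
noncomputable def leftTwistMul (P : HomBialg k T) (σ : T →ₗ[k] T →ₗ[k] k) (h g : T) : T :=
  TensorProduct.lid k T
    (TensorProduct.map (TensorProduct.lift σ) (P.str.toLinearMap ∘ₗ TensorProduct.lift P.mul)
      (TensorProduct.tensorTensorTensorComm k T T T T (P.comul h ⊗ₜ[k] P.comul g)))

/-- The right-twisted product `h ·_σ g = β(h₁ g₁) σ(h₂, g₂)`. -/
noncomputable def rightTwistMul (P : HomBialg k T) (σ : T →ₗ[k] T →ₗ[k] k) (h g : T) : T :=
  TensorProduct.rid k T
    (TensorProduct.map (P.str.toLinearMap ∘ₗ TensorProduct.lift P.mul) (TensorProduct.lift σ)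
      (TensorProduct.tensorTensorTensorComm k T T T T (P.comul h ⊗ₜ[k] P.comul g)))

/-- The convolution product on the linear dual of a monoidal Hom-coalgebra:
`(u • v)(h) = u(h₁) v(h₂)`. -/
noncomputable def convD (CC : HomCoalg k H) (u v : Module.Dual k H) : Module.Dual k H :=
  (TensorProduct.lid k k).toLinearMap ∘ₗ TensorProduct.map u v ∘ₗ CC.comul

end HomDefs

section Smash

variable {k : Type*} [Field k] {A H : Type*}
    [AddCommGroup A] [Module k A] [AddCommGroup H] [Module k H]

/-- The smash multiplication. -/
noncomputable def smashMul (AA : HomBialg k A) (HH : HomAlg k H) (act : H →ₗ[k] A →ₗ[k] H) :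
    A ⊗[k] H →ₗ[k] A ⊗[k] H →ₗ[k] A ⊗[k] H :=
  TensorProduct.curry
    ((TensorProduct.map
        (TensorProduct.lift AA.mul ∘ₗ TensorProduct.map LinearMap.id AA.str.toLinearMap)
        (TensorProduct.lift HH.mul ∘ₗ
          TensorProduct.map
            (TensorProduct.lift act ∘ₗ TensorProduct.map HH.str.symm.toLinearMap LinearMap.id)
            LinearMap.id ∘ₗ (TensorProduct.assoc k H A H).symm.toLinearMap)) ∘ₗ
      (TensorProduct.tensorTensorTensorComm k A H A (A ⊗[k] H)).toLinearMap ∘ₗ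
      TensorProduct.map LinearMap.id
        ((TensorProduct.assoc k A A H).toLinearMap ∘ₗ
          TensorProduct.map AA.comul LinearMap.id))

theorem smashMul_tmul (AA : HomBialg k A) (HH : HomAlg k H) (act : H →ₗ[k] A →ₗ[k] H)
    (a : A) (h : H) (b : A) (g : H) :
    smashMul AA HH act (a ⊗ₜ[k] h) (b ⊗ₜ[k] g)
        = TensorProduct.map (AA.mul a ∘ₗ AA.str.toLinearMap)
            (HH.mul.flip g ∘ₗ act (HH.str.symm h)) (AA.comul b) := by
  simp only [smashMul, TensorProduct.curry_apply, LinearMap.comp_apply, TensorProduct.map_tmul,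
    LinearMap.id_apply, LinearEquiv.coe_coe]
  generalize AA.comul b = t
  induction t with
  | zero => simp
  | add x y hx hy => simp only [map_add, TensorProduct.add_tmul, TensorProduct.tmul_add, hx, hy]
  | tmul x y => simp

/-- Common value of the two triple products. -/
noncomputable def smashTriple (AA : HomBialg k A) (HH : HomAlg k H) (act : H →ₗ[k] A →ₗ[k] H)
    (a : A) (h g f : H) :
    (A ⊗[k] A) ⊗[k] (A ⊗[k] (A ⊗[k] A)) →ₗ[k] A ⊗[k] H :=
  TensorProduct.map
    (AA.mul (AA.str a) ∘ₗ TensorProduct.lift AA.mul ∘ₗ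
      TensorProduct.map AA.str.toLinearMap (AA.str.toLinearMap ∘ₗ AA.str.toLinearMap))
    (HH.mul.flip (HH.str f) ∘ₗ TensorProduct.lift HH.mul ∘ₗ
      TensorProduct.map
        (act (HH.str.symm h) ∘ₗ TensorProduct.lift AA.mul ∘ₗ
          TensorProduct.map AA.str.symm.toLinearMap LinearMap.id)
        (act (HH.str.symm g)) ∘ₗ (TensorProduct.assoc k A A A).symm.toLinearMap) ∘ₗ
  (TensorProduct.tensorTensorTensorComm k A A A (A ⊗[k] A)).toLinearMap

theorem smashTriple_tmul (AA : HomBialg k A) (HH : HomAlg k H) (act : H →ₗ[k] A →ₗ[k] H)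
    (a : A) (h g f : H) (b₁ b₂ p q r : A) :
    smashTriple AA HH act a h g f ((b₁ ⊗ₜ b₂) ⊗ₜ (p ⊗ₜ (q ⊗ₜ r))) =
      AA.mul (AA.str a) (AA.mul (AA.str b₁) (AA.str (AA.str p))) ⊗ₜ[k]
      HH.mul (HH.mul (act (HH.str.symm h) (AA.mul (AA.str.symm b₂) q))
        (act (HH.str.symm g) r)) (HH.str f) := by
  simp [smashTriple]

theorem HomAlg.symm_mul (HH : HomAlg k H) (x y : H) :
    HH.str.symm (HH.mul x y) = HH.mul (HH.str.symm x) (HH.str.symm y) := by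
  rw [LinearEquiv.symm_apply_eq, HH.str_mul]; simp

theorem act_symm (AA : HomBialg k A) (HH : HomAlg k H) (act : H →ₗ[k] A →ₗ[k] H)
    (hact : IsRightHomModuleAlg AA HH act) (h : H) (a : A) :
    HH.str.symm (act h a) = act (HH.str.symm h) (AA.str.symm a) := by
  rw [LinearEquiv.symm_apply_eq, hact.1.2.2]; simp

theorem smash_left (AA : HomBialg k A) (HH : HomAlg k H) (act : H →ₗ[k] A →ₗ[k] H)
    (hact : IsRightHomModuleAlg AA HH act) (a : A) (h : H) (b : A) (g : H) (f : H)
    (s : A ⊗[k] A) :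
    smashMul AA HH act (AA.str a ⊗ₜ HH.str h)
      (TensorProduct.map (AA.mul b ∘ₗ AA.str.toLinearMap)
            (HH.mul.flip f ∘ₗ act (HH.str.symm g)) s) =
      smashTriple AA HH act a h g f (AA.comul b ⊗ₜ
        TensorProduct.assoc k A A A (TensorProduct.map AA.comul LinearMap.id s)) := by
  induction s with
  | zero => simp
  | add x y hx hy => simp only [map_add, TensorProduct.tmul_add, hx, hy]
  | tmul x y =>
    simp only [TensorProduct.map_tmul, smashMul_tmul, LinearMap.comp_apply, LinearEquiv.coe_coe,
      AA.comul_mul, AA.comul_str, LinearMap.id_apply, LinearEquiv.symm_apply_apply]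
    generalize AA.comul b = t
    generalize AA.comul x = u
    induction t with
    | zero => simp
    | add x y hx hy => simp only [map_add, TensorProduct.add_tmul, hx, hy]
    | tmul b₁ b₂ =>
      induction u with
      | zero => simp
      | add x y hx hy => simp only [map_add, TensorProduct.add_tmul, TensorProduct.tmul_add, hx, hy]
      | tmul p q =>
        simp only [TensorProduct.map_tmul, TensorProduct.tensorTensorTensorComm_tmul,
          TensorProduct.assoc_tmul, smashTriple_tmul, TensorProduct.lift.tmul,
          LinearMap.comp_apply, LinearEquiv.coe_coe, LinearMap.flip_apply, AA.str_mul]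
        congr 1
        rw [← HH.hom_assoc, hact.1.2.2, AA.str_mul]
        simp

theorem smash_right (AA : HomBialg k A) (HH : HomAlg k H) (act : H →ₗ[k] A →ₗ[k] H)
    (hact : IsRightHomModuleAlg AA HH act) (a : A) (h : H) (g : H) (c : A) (f : H)
    (t : A ⊗[k] A) :
    smashMul AA HH act
      (TensorProduct.map (AA.mul a ∘ₗ AA.str.toLinearMap)
            (HH.mul.flip g ∘ₗ act (HH.str.symm h)) t) (AA.str c ⊗ₜ HH.str f) =
      smashTriple AA HH act a h g f (t ⊗ₜ
        TensorProduct.map LinearMap.id (TensorProduct.map LinearMap.id AA.str.toLinearMap)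
        (TensorProduct.map AA.str.symm.toLinearMap AA.comul (AA.comul c))) := by
  induction t with
  | zero => simp
  | add x y hx hy => simp only [map_add, TensorProduct.add_tmul, LinearMap.add_apply, hx, hy]
  | tmul b₁ b₂ =>
    simp only [TensorProduct.map_tmul, smashMul_tmul, AA.comul_str]
    generalize AA.comul c = s
    induction s with
    | zero => simp
    | add x y hx hy => simp only [map_add, TensorProduct.tmul_add, hx, hy]
    | tmul x y =>
      simp only [TensorProduct.map_tmul, LinearMap.comp_apply, LinearEquiv.coe_coe,
        LinearMap.flip_apply, LinearMap.id_apply, HomAlg.symm_mul, hact.2.1, AA.comul_str]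
      generalize AA.comul y = u
      induction u with
      | zero => simp
      | add x y hx hy =>
        simp only [map_add, TensorProduct.tmul_add, LinearMap.add_apply, ← hx, ← hy]
      | tmul q r =>
        simp only [TensorProduct.map_tmul, smashTriple_tmul, TensorProduct.lift.tmul,
          LinearEquiv.coe_coe, LinearMap.id_apply, LinearEquiv.apply_symm_apply]
        rw [act_symm AA HH act hact, hact.1.1, ← AA.hom_assoc]
        simp

end Smash

/-- If `(A, α)` is a monoidal Hom-bialgebra and the monoidal
Hom-algebra `(H, β)` is a right `(A, α)`-Hom-module algebra via `◁`, then `A ⊗ H`,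
with structure map `α ⊗ β`, unit `1_A ⊗ 1_H` and multiplication
`(a # h)(b # g) = a α(b₁) # (β⁻¹(h) ◁ b₂) g`, is a monoidal Hom-algebra
(the right Hom-smash product). -/
theorem right_hom_smash_product_is_hom_algebra
    {k : Type*} [Field k] {A H : Type*}
    [AddCommGroup A] [Module k A] [AddCommGroup H] [Module k H]
    (AA : HomBialg k A) (HH : HomAlg k H) (act : H →ₗ[k] A →ₗ[k] H)
    (hact : IsRightHomModuleAlg AA HH act) :
    ∃ P : HomAlg k (A ⊗[k] H),
      P.one = AA.one ⊗ₜ[k] HH.one ∧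
      P.str = TensorProduct.congr AA.str HH.str ∧
      ∀ a h b g, P.mul (a ⊗ₜ[k] h) (b ⊗ₜ[k] g)
        = TensorProduct.map (AA.mul a ∘ₗ AA.str.toLinearMap)
            (HH.mul.flip g ∘ₗ act (HH.str.symm h)) (AA.comul b) := by
  have hmm := hact
  obtain ⟨⟨h1, h2, h3⟩, h4, h5⟩ := hmm
  refine ⟨{ mul := smashMul AA HH act
            one := AA.one ⊗ₜ[k] HH.one
            str := TensorProduct.congr AA.str HH.str
            hom_assoc := ?_, mul_one := ?_, one_mul := ?_, str_mul := ?_, str_one := ?_ },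
    rfl, rfl, fun a h b g => smashMul_tmul AA HH act a h b g⟩
  · intro x y z
    induction x with
    | zero => simp
    | add x x' hx hx' => simp only [map_add, LinearMap.add_apply, hx, hx']
    | tmul a h =>
    induction y with
    | zero => simp
    | add x x' hx hx' => simp only [map_add, LinearMap.add_apply, hx, hx']
    | tmul b g =>
    induction z with
    | zero => simp
    | add x x' hx hx' => simp only [map_add, hx, hx']
    | tmul c f =>
    rw [TensorProduct.congr_tmul, TensorProduct.congr_tmul, smashMul_tmul AA HH act b,
      smashMul_tmul AA HH act a, smash_left AA HH act hact, smash_right AA HH act hact,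
      AA.hom_coassoc]
    congr 2
    generalize AA.comul c = s
    induction s with
    | zero => simp
    | add x x' hx hx' => simp only [map_add, hx, hx']
    | tmul x y =>
      simp only [TensorProduct.map_tmul, LinearMap.id_apply]
      generalize AA.comul x = u
      induction u with
      | zero => simp
      | add x x' hx hx' => simp only [map_add, TensorProduct.add_tmul, hx, hx']
      | tmul p q => simp
  · intro x
    induction x with
    | zero => simp
    | add x x' hx hx' => simp only [map_add, LinearMap.add_apply, hx, hx']
    | tmul a h => simp [smashMul_tmul, AA.comul_one, AA.str_one, AA.mul_one, HH.mul_one, h2]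
  · intro x
    induction x with
    | zero => simp
    | add x x' hx hx' => simp only [map_add, hx, hx']
    | tmul b g =>
      have e := AA.counit_comul_right b
      rw [smashMul_tmul, TensorProduct.congr_tmul,
        show AA.str b = AA.str (AA.str (AA.str.symm b)) by simp, ← e]
      have hone : HH.str.symm HH.one = HH.one := by
        rw [LinearEquiv.symm_apply_eq, HH.str_one]
      rw [hone]
      generalize AA.comul b = t
      induction t with
      | zero => simp
      | add x x' hx hx' => simp only [map_add, TensorProduct.add_tmul, hx, hx']
      | tmul p q => simp [h5, AA.one_mul, HH.one_mul, TensorProduct.smul_tmul']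
  · intro x y
    induction x with
    | zero => simp
    | add x x' hx hx' => simp only [map_add, LinearMap.add_apply, hx, hx']
    | tmul a h =>
    induction y with
    | zero => simp
    | add x x' hx hx' => simp only [map_add, hx, hx']
    | tmul b g =>
      simp only [TensorProduct.congr_tmul, smashMul_tmul, AA.comul_str]
      generalize AA.comul b = t
      induction t with
      | zero => simp
      | add x x' hx hx' => simp only [map_add, hx, hx']
      | tmul p q => simp [AA.str_mul, HH.str_mul, h3]
  · simp [AA.str_one, HH.str_one]
end

section
/- Let (H, β) be a monoidal Hom-Hopf algebra with bijective antipode S and fix an integer n. Then H, equipped with the coaction ρ : H → H^op ⊗ H defined by ρ(h) = β^n(S⁻¹(h_22))·β^{n-1}(h_1) ⊗ β(h_21) (product computed in H), is a left (H^op, β)-Hom-comodule coalgebra, where H^op is H with the opposite multiplication and the same unit, comultiplication, counit and automorphism β. -/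
open TensorProduct

section GenericHopf
open Coalgebra WithConv HopfAlgebra LinearMap
variable {k A B C: Type*} [Field k] [Ring A] [HopfAlgebra k A] [Ring B] [Algebra k B] [Ring C] [Algebra k C]

noncomputable def cvA (f g : A →ₗ[k] B) : A →ₗ[k] B := (toConv f * toConv g).ofConv

lemma cvA_apply (f g : A →ₗ[k] B) (h : A) :
    cvA f g h = mul' k B (TensorProduct.map f g (comul h)) := rfl

lemma cvA_assoc (f g l : A →ₗ[k] B) : cvA (cvA f g) l = cvA f (cvA g l) := by
  simp [cvA, mul_assoc]

lemma comp_cvA (D : B →ₐ[k] C) (f g : A →ₗ[k] B) :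
    D.toLinearMap ∘ₗ cvA f g = cvA (D.toLinearMap ∘ₗ f) (D.toLinearMap ∘ₗ g) :=
  algHom_comp_convMul_distrib D (toConv f) (toConv g)

/-- convolution unit -/
noncomputable def unA (k A B : Type*) [Field k] [Ring A] [HopfAlgebra k A] [Ring B] [Algebra k B] :
    A →ₗ[k] B := Algebra.linearMap k B ∘ₗ counit

lemma un_cvA (f : A →ₗ[k] B) : cvA (unA k A B) f = f := 
  congrArg WithConv.ofConv (one_mul (toConv f))
lemma cvA_un (f : A →ₗ[k] B) : cvA f (unA k A B) = f := 
  congrArg WithConv.ofConv (mul_one (toConv f))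

lemma alg_cv_antip (D : A →ₐ[k] B) :
    cvA D.toLinearMap (D.toLinearMap ∘ₗ antipode k) = unA k A B := by
  have := comp_cvA D LinearMap.id (antipode k)
  rw [LinearMap.comp_id] at this
  rw [← this]
  have h2 : cvA (LinearMap.id) (antipode k) = unA k A A := 
    congrArg WithConv.ofConv (LinearMap.id_mul_antipode (R := k) (C := A))
  rw [h2]
  ext; simp [unA]

lemma antip_cv_alg (D : A →ₐ[k] B) :
    cvA (D.toLinearMap ∘ₗ antipode k) D.toLinearMap = unA k A B := by
  have := comp_cvA D (antipode k) LinearMap.id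
  rw [LinearMap.comp_id] at this
  rw [← this]
  have h2 : cvA (antipode k) (LinearMap.id) = unA k A A := 
    congrArg WithConv.ofConv (LinearMap.antipode_mul_id (R := k) (C := A))
  rw [h2]
  ext; simp [unA]

/-- the coadjoint type coaction -/
noncomputable def rA (k A : Type*) [Field k] [Ring A] [HopfAlgebra k A] : A →ₗ[k] A ⊗[k] A :=
  TensorProduct.map (mul' k A ∘ₗ TensorProduct.map LinearMap.id (antipode k)) LinearMap.id
  ∘ₗ (TensorProduct.assoc k A A A).symm.toLinearMap
  ∘ₗ TensorProduct.map LinearMap.id (TensorProduct.comm k A A).toLinearMap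
  ∘ₗ TensorProduct.map LinearMap.id comul ∘ₗ comul

noncomputable abbrev iL (k A B : Type*) [Field k] [Ring A] [Algebra k A] [Ring B] [Algebra k B] :
    A →ₐ[k] A ⊗[k] B := Algebra.TensorProduct.includeLeft
noncomputable abbrev iR (k A B : Type*) [Field k] [Ring A] [Algebra k A] [Ring B] [Algebra k B] :
    B →ₐ[k] A ⊗[k] B := Algebra.TensorProduct.includeRight

lemma map_rA (φ : A →ₗ[k] B) :
    TensorProduct.map LinearMap.id φ ∘ₗ rA k A = 
      cvA (iL k A B).toLinearMap (cvA ((iR k A B).toLinearMap ∘ₗ φ) 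
        ((iL k A B).toLinearMap ∘ₗ antipode k)) := by
  have key : TensorProduct.map LinearMap.id φ ∘ₗ 
      TensorProduct.map (mul' k A ∘ₗ TensorProduct.map LinearMap.id (antipode k)) LinearMap.id
      ∘ₗ (TensorProduct.assoc k A A A).symm.toLinearMap
      ∘ₗ TensorProduct.map LinearMap.id (TensorProduct.comm k A A).toLinearMap =
      mul' k (A ⊗[k] B) ∘ₗ TensorProduct.map (iL k A B).toLinearMap 
        (mul' k (A ⊗[k] B) ∘ₗ TensorProduct.map ((iR k A B).toLinearMap ∘ₗ φ) 
        ((iL k A B).toLinearMap ∘ₗ antipode k)) := by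
    ext a b c; simp
  ext h
  have := LinearMap.congr_fun key (TensorProduct.map LinearMap.id comul (comul h))
  simp only [LinearMap.comp_apply, rA] at this ⊢
  rw [this, cvA_apply]
  congr 1
  rw [← LinearMap.comp_apply, ← TensorProduct.map_comp]
  rfl

lemma rA_eq : rA k A = cvA (iL k A A).toLinearMap (cvA ((iR k A A).toLinearMap) 
        ((iL k A A).toLinearMap ∘ₗ antipode k)) := by
  have := map_rA (k := k) (A := A) LinearMap.id
  simpa using this

theorem rA_coassoc : TensorProduct.map LinearMap.id (rA k A) ∘ₗ rA k A =
    (TensorProduct.assoc k A A A).toLinearMap ∘ₗ TensorProduct.map comul LinearMap.id ∘ₗ rA k A := by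
  set D : A ⊗[k] A →ₐ[k] A ⊗[k] (A ⊗[k] A) := 
    (Algebra.TensorProduct.assoc k k k A A A).toAlgHom.comp 
      (Algebra.TensorProduct.map (Bialgebra.comulAlgHom k A) (AlgHom.id k A)) with hD
  have hD' : (TensorProduct.assoc k A A A).toLinearMap ∘ₗ TensorProduct.map comul LinearMap.id = D.toLinearMap := by
    ext; rfl
  set j1 := iL k A (A ⊗[k] A)
  set j2 := (iR k A (A ⊗[k] A)).comp (iL k A A)
  set j3 := (iR k A (A ⊗[k] A)).comp (iR k A A)
  have e3 : D.toLinearMap ∘ₗ (iR k A A).toLinearMap = j3.toLinearMap := by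
    ext h; simp [D, j3, Algebra.TensorProduct.one_def]
  have e1 : (D.comp (iL k A A)).toLinearMap = cvA j1.toLinearMap j2.toLinearMap := by
    have : (TensorProduct.assoc k A A A).toLinearMap ∘ₗ (TensorProduct.mk k (A ⊗[k] A) A).flip 1 = 
      mul' k _ ∘ₗ TensorProduct.map j1.toLinearMap j2.toLinearMap := by
      ext a b; simp [j1, j2]
    ext h; exact LinearMap.congr_fun this (comul h)
  have eT : (D.comp (iL k A A)).toLinearMap ∘ₗ antipode k = 
      cvA (j2.toLinearMap ∘ₗ antipode k) (j1.toLinearMap ∘ₗ antipode k) := by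
    have h1 := antip_cv_alg (D.comp (iL k A A))
    have h2 : cvA (D.comp (iL k A A)).toLinearMap (cvA (j2.toLinearMap ∘ₗ antipode k) (j1.toLinearMap ∘ₗ antipode k)) = unA k A _ := by
      rw [e1, cvA_assoc, ← cvA_assoc j2.toLinearMap, alg_cv_antip, un_cvA, alg_cv_antip]
    rw [← cvA_un ((D.comp (iL k A A)).toLinearMap ∘ₗ antipode k), ← h2, ← cvA_assoc, h1, un_cvA]
  rw [← LinearMap.comp_assoc, hD', map_rA]
  conv_lhs => rw [rA_eq, comp_cvA, comp_cvA]
  conv_rhs => rw [rA_eq, comp_cvA, comp_cvA, ← LinearMap.comp_assoc, ← AlgHom.comp_toLinearMap,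
    eT, e1, e3]
  simp only [cvA_assoc]
  rfl

theorem rA_comul : TensorProduct.map LinearMap.id comul ∘ₗ rA k A =
    TensorProduct.map (mul' k A) LinearMap.id ∘ₗ 
      (TensorProduct.tensorTensorTensorComm k A A A A).toLinearMap ∘ₗ 
      TensorProduct.map (rA k A) (rA k A) ∘ₗ comul := by
  set j1 := iL k A (A ⊗[k] A)
  set j2 := (iR k A (A ⊗[k] A)).comp (iL k A A)
  set j3 := (iR k A (A ⊗[k] A)).comp (iR k A A)
  have e1 : (iR k A (A ⊗[k] A)).toLinearMap ∘ₗ comul = cvA j2.toLinearMap j3.toLinearMap := by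
    have : (iR k A (A ⊗[k] A)).toLinearMap = 
      mul' k _ ∘ₗ TensorProduct.map j2.toLinearMap j3.toLinearMap := by
      ext a b; simp [j2, j3]
    ext h; exact LinearMap.congr_fun this (comul h)
  set E2 : A ⊗[k] A →ₐ[k] A ⊗[k] (A ⊗[k] A) := 
    Algebra.TensorProduct.map (AlgHom.id k A) (iL k A A)
  set E3 : A ⊗[k] A →ₐ[k] A ⊗[k] (A ⊗[k] A) := 
    Algebra.TensorProduct.map (AlgHom.id k A) (iR k A A)
  have e2 : TensorProduct.map (mul' k A) LinearMap.id ∘ₗ 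
      (TensorProduct.tensorTensorTensorComm k A A A A).toLinearMap  = 
      mul' k _ ∘ₗ TensorProduct.map E2.toLinearMap E3.toLinearMap := by
    ext a b c d; simp [E2, E3]
  have e4 : TensorProduct.map (mul' k A) LinearMap.id ∘ₗ 
      (TensorProduct.tensorTensorTensorComm k A A A A).toLinearMap ∘ₗ 
      TensorProduct.map (rA k A) (rA k A) ∘ₗ comul = 
      cvA (E2.toLinearMap ∘ₗ rA k A) (E3.toLinearMap ∘ₗ rA k A) := by
    rw [← LinearMap.comp_assoc, e2]
    ext h
    simp only [LinearMap.comp_apply, cvA_apply, TensorProduct.map_comp]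
  have f1 : E2.toLinearMap ∘ₗ (iL k A A).toLinearMap = j1.toLinearMap := by ext; simp [E2, j1, Algebra.TensorProduct.one_def]
  have f2 : E2.toLinearMap ∘ₗ (iR k A A).toLinearMap = j2.toLinearMap := by ext; simp [E2, j2]
  have g1 : E3.toLinearMap ∘ₗ (iL k A A).toLinearMap = j1.toLinearMap := by ext; simp [E3, j1, Algebra.TensorProduct.one_def]
  have g2 : E3.toLinearMap ∘ₗ (iR k A A).toLinearMap = j3.toLinearMap := by ext; simp [E3, j3]
  rw [e4, map_rA, e1, rA_eq, comp_cvA, comp_cvA, comp_cvA, comp_cvA, ← LinearMap.comp_assoc, 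
    ← LinearMap.comp_assoc, f1, f2, g1, g2]
  simp only [cvA_assoc]
  rw [← cvA_assoc _ j1.toLinearMap, antip_cv_alg, un_cvA]

theorem rA_counit : (TensorProduct.rid k A).toLinearMap ∘ₗ TensorProduct.map LinearMap.id counit ∘ₗ rA k A =
    Algebra.linearMap k A ∘ₗ counit := by
  have e : (iR k A k).toLinearMap ∘ₗ counit = unA k A _ := by
    ext h; simp [unA, Algebra.TensorProduct.algebraMap_apply', -Algebra.TensorProduct.algebraMap_apply]
  rw [map_rA, e, un_cvA, alg_cv_antip]
  ext; simp [unA]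

theorem counit_rA : (TensorProduct.lid k A).toLinearMap ∘ₗ TensorProduct.map counit LinearMap.id ∘ₗ rA k A =
    LinearMap.id := by
  set D : A ⊗[k] A →ₐ[k] A := 
    (Algebra.TensorProduct.lid k A).toAlgHom.comp 
      (Algebra.TensorProduct.map (Bialgebra.counitAlgHom k A) (AlgHom.id k A)) with hD
  have hD' : (TensorProduct.lid k A).toLinearMap ∘ₗ TensorProduct.map counit LinearMap.id = D.toLinearMap := by
    ext; rfl
  have e1 : D.toLinearMap ∘ₗ (iL k A A).toLinearMap = unA k A A := by
    ext; simp [D, unA, Algebra.algebraMap_eq_smul_one]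
  have e2 : D.toLinearMap ∘ₗ (iR k A A).toLinearMap = LinearMap.id := by
    ext; simp [D]
  have e3 : unA k A A ∘ₗ antipode k = unA k A A := by
    ext; simp [unA]
  rw [← LinearMap.comp_assoc, hD', rA_eq, comp_cvA, comp_cvA, ← LinearMap.comp_assoc, e1, e2, e3,
    un_cvA, cvA_un]

end GenericHopf

section Untwist
variable {k H : Type*} [Field k] [AddCommGroup H] [Module k H]

/-- untwisted multiplication -/
noncomputable def uMul (P : HomHopf k H) : H →ₗ[k] H →ₗ[k] H :=
  P.mul.compr₂ P.str.symm.toLinearMap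

/-- untwisted comultiplication -/
noncomputable def uComul (P : HomHopf k H) : H →ₗ[k] H ⊗[k] H :=
  P.comul ∘ₗ P.str.toLinearMap

lemma uMul_apply (P : HomHopf k H) (a b : H) : uMul P a b = P.str.symm (P.mul a b) := rfl

lemma symm_mul (P : HomHopf k H) (a b : H) :
    P.str.symm (P.mul a b) = P.mul (P.str.symm a) (P.str.symm b) := by
  apply P.str.injective
  simp [P.str_mul]

lemma symm_one (P : HomHopf k H) : P.str.symm P.one = P.one := by
  apply P.str.injective
  simp [P.str_one]

/-- untwisted ring -/
@[reducible] noncomputable def uRing (P : HomHopf k H) : Ring H :=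
  { (inferInstance : AddCommGroup H) with
    mul := fun a b => uMul P a b
    one := P.one
    mul_assoc := fun a b c => by
      change uMul P (uMul P a b) c = uMul P a (uMul P b c)
      simp only [uMul_apply]
      congr 1
      apply P.str.injective
      simp only [P.str_mul, LinearEquiv.apply_symm_apply]
      exact (P.hom_assoc a b c).symm
    one_mul := fun a => by
      change uMul P P.one a = a
      simp [uMul_apply, P.one_mul]
    mul_one := fun a => by
      change uMul P a P.one = a
      simp [uMul_apply, P.mul_one]
    left_distrib := fun a b c => by
      change uMul P a (b + c) = uMul P a b + uMul P a c
      simp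
    right_distrib := fun a b c => by
      change uMul P (a + b) c = uMul P a c + uMul P b c
      simp
    zero_mul := fun a => by
      change uMul P 0 a = 0
      simp
    mul_zero := fun a => by
      change uMul P a 0 = 0
      simp }

/-- untwisted algebra -/
@[reducible] noncomputable def uAlg (P : HomHopf k H) :
    letI := uRing P
    Algebra k H :=
  letI := uRing P
  { (inferInstance : Module k H) with
    algebraMap :=
      { toFun := fun r => r • P.one
        map_one' := one_smul _ _
        map_mul' := fun r s => by
          change (r * s) • P.one = uMul P (r • P.one) (s • P.one)
          simp [uMul_apply, P.mul_one, mul_smul]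
          rw [smul_comm]
        map_zero' := zero_smul _ _
        map_add' := fun r s => add_smul r s P.one }
    commutes' := fun r x => by
      change uMul P (r • P.one) x = uMul P x (r • P.one)
      simp [uMul_apply, P.one_mul, P.mul_one]
    smul_def' := fun r x => by
      change r • x = uMul P (r • P.one) x
      simp [uMul_apply, P.one_mul] }

lemma uComul_str (P : HomHopf k H) (h : H) : uComul P h =
   TensorProduct.map P.str.toLinearMap P.str.toLinearMap (P.comul h) := P.comul_str h

lemma uComul_coassoc (P : HomHopf k H) :
    (TensorProduct.assoc k H H H).toLinearMap ∘ₗ (uComul P).rTensor H ∘ₗ uComul P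
     = (uComul P).lTensor H ∘ₗ uComul P := by
  ext h
  have e := P.hom_coassoc (P.str (P.str h))
  rw [P.comul_str (P.str h)] at e
  have e1 : ((uComul P).lTensor H) =
      TensorProduct.map P.str.symm.toLinearMap P.comul ∘ₗ
        TensorProduct.map P.str.toLinearMap P.str.toLinearMap := by
    rw [← TensorProduct.map_comp]
    ext; simp [uComul]
  have e2 : ((uComul P).rTensor H) =
      TensorProduct.map P.comul P.str.symm.toLinearMap ∘ₗ
        TensorProduct.map P.str.toLinearMap P.str.toLinearMap := by
    rw [← TensorProduct.map_comp]
    ext; simp [uComul]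
  rw [e1, e2]
  exact e.symm

/-- untwisted coalgebra -/
@[reducible] noncomputable def uCoalg (P : HomHopf k H) : Coalgebra k H where
  comul := uComul P
  counit := P.counit
  coassoc := uComul_coassoc P
  rTensor_counit_comp_comul := by
    ext h
    apply (TensorProduct.lid k H).injective
    have := P.counit_comul_left (P.str h)
    simp only [LinearEquiv.symm_apply_apply] at this
    simp [uComul, LinearMap.rTensor, this]
  lTensor_counit_comp_comul := by
    ext h
    apply (TensorProduct.rid k H).injective
    have := P.counit_comul_right (P.str h)
    simp only [LinearEquiv.symm_apply_apply] at this
    simp [uComul, LinearMap.lTensor, this]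

lemma uComul_mul (P : HomHopf k H) (a b : H) : uComul P (uMul P a b) =
    TensorProduct.map (TensorProduct.lift (uMul P)) (TensorProduct.lift (uMul P))
      (TensorProduct.tensorTensorTensorComm k H H H H (uComul P a ⊗ₜ uComul P b)) := by
  rw [uComul_str P a, uComul_str P b, ← TensorProduct.map_tmul]
  have : TensorProduct.map (TensorProduct.lift (uMul P)) (TensorProduct.lift (uMul P)) ∘ₗ
     (TensorProduct.tensorTensorTensorComm k H H H H).toLinearMap ∘ₗ
     TensorProduct.map (TensorProduct.map P.str.toLinearMap P.str.toLinearMap)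
      (TensorProduct.map P.str.toLinearMap P.str.toLinearMap) =
      TensorProduct.map (TensorProduct.lift P.mul) (TensorProduct.lift P.mul) ∘ₗ
      (TensorProduct.tensorTensorTensorComm k H H H H).toLinearMap := by
    ext a b c d
    simp [uMul_apply, symm_mul]
  refine Eq.trans ?_ (LinearMap.congr_fun this (P.comul a ⊗ₜ P.comul b)).symm
  simp [uComul, uMul_apply, P.comul_mul]

/-- untwisted Hopf algebra -/
@[reducible] noncomputable def uHopf (P : HomHopf k H) :
    letI := uRing P
    HopfAlgebra k H :=
  letI := uRing P
  letI := uAlg P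
  letI := uCoalg P
  letI : Bialgebra k H := Bialgebra.mk' k H P.counit_one
    (fun {a b} => by
      change P.counit (P.str.symm (P.mul a b)) = P.counit a * P.counit b
      rw [← P.counit_mul, ← P.counit_str (P.str.symm _), LinearEquiv.apply_symm_apply])
    (by
      change P.comul (P.str P.one) = _
      rw [P.str_one, P.comul_one]; rfl)
    (fun {a b} => by
      refine (uComul_mul P a b).trans ?_
      have : ∀ x y : H ⊗[k] H, TensorProduct.map (TensorProduct.lift (uMul P)) (TensorProduct.lift (uMul P))
        (TensorProduct.tensorTensorTensorComm k H H H H (x ⊗ₜ y)) = x * y := by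
        intro x y
        induction x with
        | zero => simp
        | add x1 x2 h1 h2 => rw [TensorProduct.add_tmul, map_add, map_add, h1, h2, add_mul]
        | tmul p q =>
          induction y with
          | zero => simp
          | add x1 x2 h1 h2 => rw [TensorProduct.tmul_add, map_add, map_add, h1, h2, mul_add]
          | tmul r s =>
            rw [TensorProduct.tensorTensorTensorComm_tmul, TensorProduct.map_tmul]
            exact (Algebra.TensorProduct.tmul_mul_tmul p r q s).symm
      exact this _ _)
  { antipode := P.S
    mul_antipode_rTensor_comul := by
      ext h
      change (LinearMap.mul' k H) (TensorProduct.map P.S LinearMap.id (P.comul (P.str h))) = P.counit h • P.one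
      have : LinearMap.mul' k H = P.str.symm.toLinearMap ∘ₗ TensorProduct.lift P.mul := by
        ext; rfl
      rw [this, LinearMap.comp_apply, P.S_mul_left, P.counit_str]
      simp [symm_one]
    mul_antipode_lTensor_comul := by
      ext h
      change (LinearMap.mul' k H) (TensorProduct.map LinearMap.id P.S (P.comul (P.str h))) = P.counit h • P.one
      have : LinearMap.mul' k H = P.str.symm.toLinearMap ∘ₗ TensorProduct.lift P.mul := by
        ext; rfl
      rw [this, LinearMap.comp_apply, P.S_mul_right, P.counit_str]
      simp [symm_one] }

lemma S_antimul (P : HomHopf k H) (a b : H) : P.S (P.mul a b) = P.mul (P.S b) (P.S a) := by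
  have h : P.S (uMul P a b) = uMul P (P.S b) (P.S a) :=
    @HopfAlgebra.antipode_mul_antidistrib k H _ (uRing P).toSemiring (uHopf P) a b
  apply P.str.symm.injective
  simp only [uMul_apply] at h
  rw [← h]
  apply P.str.injective
  rw [P.S_str]
  simp

/-- untwisted coaction -/
noncomputable def uR (P : HomHopf k H) : H →ₗ[k] H ⊗[k] H :=
  TensorProduct.map (TensorProduct.lift (uMul P) ∘ₗ TensorProduct.map LinearMap.id P.S) LinearMap.id
  ∘ₗ (TensorProduct.assoc k H H H).symm.toLinearMap
  ∘ₗ TensorProduct.map LinearMap.id (TensorProduct.comm k H H).toLinearMap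
  ∘ₗ TensorProduct.map LinearMap.id (uComul P) ∘ₗ uComul P

lemma uR_eq (P : HomHopf k H) : uR P = @rA k H _ (uRing P) (uHopf P) := rfl

theorem uR_coassoc (P : HomHopf k H) : TensorProduct.map LinearMap.id (uR P) ∘ₗ uR P =
    (TensorProduct.assoc k H H H).toLinearMap ∘ₗ
      TensorProduct.map (uComul P) LinearMap.id ∘ₗ uR P :=
  @rA_coassoc k H _ (uRing P) (uHopf P)

theorem uR_comul (P : HomHopf k H) : TensorProduct.map LinearMap.id (uComul P) ∘ₗ uR P =
    TensorProduct.map (TensorProduct.lift (uMul P)) LinearMap.id ∘ₗ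
      (TensorProduct.tensorTensorTensorComm k H H H H).toLinearMap ∘ₗ
      TensorProduct.map (uR P) (uR P) ∘ₗ uComul P :=
  @rA_comul k H _ (uRing P) (uHopf P)

theorem uR_counit (P : HomHopf k H) (h : H) :
    TensorProduct.rid k H (TensorProduct.map LinearMap.id P.counit (uR P h)) =
    P.counit h • P.one :=
  LinearMap.congr_fun (@rA_counit k H _ (uRing P) (uHopf P)) h

theorem counit_uR (P : HomHopf k H) (h : H) :
    TensorProduct.lid k H (TensorProduct.map P.counit LinearMap.id (uR P h)) = h :=
  LinearMap.congr_fun (@counit_rA k H _ (uRing P) (uHopf P)) h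

end Untwist

section Final
variable {k H : Type*} [Field k] [AddCommGroup H] [Module k H]

/-- automorphisms of the underlying Hom-bialgebra -/
structure HomAuto (P : HomHopf k H) (γ : H ≃ₗ[k] H) : Prop where
  mul : ∀ a b, γ (P.mul a b) = P.mul (γ a) (γ b)
  one : γ P.one = P.one
  comul : ∀ c, P.comul (γ c) = TensorProduct.map γ.toLinearMap γ.toLinearMap (P.comul c)
  counit : ∀ c, P.counit (γ c) = P.counit c
  str : ∀ c, γ (P.str c) = P.str (γ c)

lemma HomAuto.inv (P : HomHopf k H) {γ : H ≃ₗ[k] H} (h : HomAuto P γ) : HomAuto P γ.symm where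
  mul a b := by apply γ.injective; simp [h.mul]
  one := by apply γ.injective; simp [h.one]
  comul c := by
    obtain ⟨c, rfl⟩ := γ.surjective c
    rw [h.comul, ← LinearMap.comp_apply (TensorProduct.map _ _), ← TensorProduct.map_comp]
    simp
  counit c := by rw [← h.counit]; simp
  str c := by apply γ.injective; simp [h.str]

lemma homAuto_zpow (P : HomHopf k H) (n : ℤ) : HomAuto P (P.str ^ n) := by
  let K : Subgroup (H ≃ₗ[k] H) :=
    { carrier := {γ | HomAuto P γ}
      mul_mem' := by
        rintro a b (ha : HomAuto P a) (hb : HomAuto P b)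
        refine ⟨fun x y => ?_, ?_, fun c => ?_, fun c => ?_, fun c => ?_⟩
        · simp [LinearEquiv.mul_apply, ha.mul, hb.mul]
        · simp [LinearEquiv.mul_apply, ha.one, hb.one]
        · simp only [LinearEquiv.mul_apply, ha.comul, hb.comul]
          rw [← LinearMap.comp_apply (TensorProduct.map _ _), ← TensorProduct.map_comp]
          rfl
        · simp [LinearEquiv.mul_apply, ha.counit, hb.counit]
        · simp [LinearEquiv.mul_apply, ha.str, hb.str]
      one_mem' := by
        refine ⟨fun x y => rfl, rfl, fun c => ?_, fun c => rfl, fun c => rfl⟩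
        change P.comul c = TensorProduct.map LinearMap.id LinearMap.id (P.comul c)
        simp
      inv_mem' := fun {a} ha => HomAuto.inv P ha }
  have hb : P.str ∈ K := ⟨P.str_mul, P.str_one, P.comul_str, P.counit_str, fun _ => rfl⟩
  exact K.zpow_mem hb n

lemma uR_str (P : HomHopf k H) (h : H) :
    uR P (P.str h) = TensorProduct.map P.str.toLinearMap P.str.toLinearMap (uR P h) := by
  have e1 : uComul P ∘ₗ P.str.toLinearMap =
      TensorProduct.map P.str.toLinearMap P.str.toLinearMap ∘ₗ uComul P := by
    ext h
    exact P.comul_str (P.str h)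
  have e2 : TensorProduct.map LinearMap.id (uComul P) ∘ₗ
      TensorProduct.map P.str.toLinearMap P.str.toLinearMap =
      TensorProduct.map P.str.toLinearMap
        (TensorProduct.map P.str.toLinearMap P.str.toLinearMap) ∘ₗ
      TensorProduct.map LinearMap.id (uComul P) := by
    rw [← TensorProduct.map_comp, ← TensorProduct.map_comp, e1]
    rfl
  have e3 : (TensorProduct.map (TensorProduct.lift (uMul P) ∘ₗ TensorProduct.map LinearMap.id P.S) LinearMap.id
      ∘ₗ (TensorProduct.assoc k H H H).symm.toLinearMap
      ∘ₗ TensorProduct.map LinearMap.id (TensorProduct.comm k H H).toLinearMap) ∘ₗ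
      TensorProduct.map P.str.toLinearMap
        (TensorProduct.map P.str.toLinearMap P.str.toLinearMap) =
      TensorProduct.map P.str.toLinearMap P.str.toLinearMap ∘ₗ
      (TensorProduct.map (TensorProduct.lift (uMul P) ∘ₗ TensorProduct.map LinearMap.id P.S) LinearMap.id
      ∘ₗ (TensorProduct.assoc k H H H).symm.toLinearMap
      ∘ₗ TensorProduct.map LinearMap.id (TensorProduct.comm k H H).toLinearMap) := by
    ext a b c
    simp [uMul_apply, symm_mul, P.str_mul, ← P.S_str]
  have a1 := LinearMap.congr_fun e1 h
  have a2 := LinearMap.congr_fun e2 (uComul P h)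
  have a3 := LinearMap.congr_fun e3 (TensorProduct.map LinearMap.id (uComul P) (uComul P h))
  simp only [LinearMap.comp_apply, LinearEquiv.coe_coe] at a1 a2 a3
  simp only [uR, LinearMap.comp_apply, LinearEquiv.coe_coe]
  rw [a1, a2, a3]

lemma uR_symm (P : HomHopf k H) (h : H) :
    uR P (P.str.symm h) =
      TensorProduct.map P.str.symm.toLinearMap P.str.symm.toLinearMap (uR P h) := by
  obtain ⟨h, rfl⟩ := P.str.surjective h
  rw [uR_str, ← LinearMap.comp_apply (TensorProduct.map _ _), ← TensorProduct.map_comp]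
  simp

lemma comul_symm (P : HomHopf k H) (h : H) :
    P.comul (P.str.symm h) =
      TensorProduct.map P.str.symm.toLinearMap P.str.symm.toLinearMap (P.comul h) := by
  obtain ⟨h, rfl⟩ := P.str.surjective h
  rw [P.comul_str, ← LinearMap.comp_apply (TensorProduct.map _ _), ← TensorProduct.map_comp]
  simp

theorem twisted_coaction (P : HomHopf k H) (γ : H ≃ₗ[k] H) (hγ : HomAuto P γ) :
    IsLeftHomComoduleCoalg P.toHomBialg P.toHomCoalg
      (TensorProduct.map γ.toLinearMap P.str.symm.toLinearMap ∘ₗ uR P) := by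
  set g := γ.toLinearMap with hg
  set b := P.str.symm.toLinearMap with hb
  have hbr : uR P ∘ₗ b = TensorProduct.map b b ∘ₗ uR P := by
    ext h; exact uR_symm P h
  have hbg : b ∘ₗ g = g ∘ₗ b := by
    ext h
    apply P.str.injective
    simp [b, g, ← hγ.str]
  have hΔ : P.comul = TensorProduct.map b b ∘ₗ uComul P := by
    ext h
    simp only [uComul, LinearMap.comp_apply, hb, LinearEquiv.coe_coe]
    rw [← comul_symm]; simp
  have hΔg : P.comul ∘ₗ g = TensorProduct.map g g ∘ₗ P.comul := by
    ext h; exact hγ.comul h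
  have hΔb : P.comul ∘ₗ b = TensorProduct.map b b ∘ₗ P.comul := by
    ext h; exact comul_symm P h
  have hεg : P.counit ∘ₗ g = P.counit := by
    ext h; exact hγ.counit h
  have hεb : P.counit ∘ₗ b = P.counit := by
    ext h; simp [b, ← P.counit_str (P.str.symm h)]
  refine ⟨⟨?_, ?_, ?_⟩, ?_, ?_⟩
  · intro m
    change (TensorProduct.map b (TensorProduct.map g b ∘ₗ uR P))
        (TensorProduct.map g b (uR P m)) =
      TensorProduct.assoc k H H H (TensorProduct.map P.comul b
        (TensorProduct.map g b (uR P m)))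
    have l1 : TensorProduct.map b (TensorProduct.map g b ∘ₗ uR P) ∘ₗ TensorProduct.map g b =
        TensorProduct.map (b ∘ₗ g) (TensorProduct.map (b ∘ₗ g) (b ∘ₗ b)) ∘ₗ
          TensorProduct.map LinearMap.id (uR P) := by
      rw [← TensorProduct.map_comp, ← TensorProduct.map_comp, LinearMap.comp_assoc, hbr,
        ← LinearMap.comp_assoc, ← TensorProduct.map_comp, hbg]
      rfl
    have l2 : TensorProduct.map P.comul b ∘ₗ TensorProduct.map g b =
        TensorProduct.map (TensorProduct.map (b ∘ₗ g) (b ∘ₗ g)) (b ∘ₗ b) ∘ₗ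
          TensorProduct.map (uComul P) LinearMap.id := by
      rw [← TensorProduct.map_comp, ← TensorProduct.map_comp, hΔg, hΔ,
        ← LinearMap.comp_assoc, ← TensorProduct.map_comp, hbg]
      rfl
    have l3 : (TensorProduct.assoc k H H H).toLinearMap ∘ₗ
        TensorProduct.map (TensorProduct.map (b ∘ₗ g) (b ∘ₗ g)) (b ∘ₗ b) =
        TensorProduct.map (b ∘ₗ g) (TensorProduct.map (b ∘ₗ g) (b ∘ₗ b)) ∘ₗ
        (TensorProduct.assoc k H H H).toLinearMap := by
      ext; simp
    have a1 := LinearMap.congr_fun l1 (uR P m)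
    have a2 := LinearMap.congr_fun l2 (uR P m)
    have a3 := LinearMap.congr_fun l3 (TensorProduct.map (uComul P) LinearMap.id (uR P m))
    have a4 := LinearMap.congr_fun (uR_coassoc P) m
    rw [LinearMap.comp_apply, LinearMap.comp_apply] at a1 a2 a3 
    simp only [LinearMap.comp_apply (f := uR P), LinearMap.comp_apply (f := TensorProduct.map (uComul P) LinearMap.id),
      LinearMap.comp_apply, LinearEquiv.coe_coe] at a4
    rw [a1, a2]
    refine Eq.trans ?_ a3.symm
    exact congrArg _ a4
  · intro m
    change TensorProduct.map g b (uR P (P.str m)) =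
      TensorProduct.map P.str.toLinearMap P.str.toLinearMap (TensorProduct.map g b (uR P m))
    rw [uR_str]
    have : TensorProduct.map g b ∘ₗ TensorProduct.map P.str.toLinearMap P.str.toLinearMap =
        TensorProduct.map P.str.toLinearMap P.str.toLinearMap ∘ₗ TensorProduct.map g b := by
      rw [← TensorProduct.map_comp, ← TensorProduct.map_comp]
      congr 1
      · ext h; simp [g, hγ.str]
      · ext h; simp [b]
    exact LinearMap.congr_fun this (uR P m)
  · intro m
    change TensorProduct.lid k H (TensorProduct.map P.counit LinearMap.id
      (TensorProduct.map g b (uR P m))) = b m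
    rw [← LinearMap.comp_apply, ← TensorProduct.map_comp, hεg]
    have : (TensorProduct.lid k H).toLinearMap ∘ₗ
        TensorProduct.map P.counit (LinearMap.id ∘ₗ b) =
        b ∘ₗ (TensorProduct.lid k H).toLinearMap ∘ₗ TensorProduct.map P.counit LinearMap.id := by
      ext; simp
    refine (LinearMap.congr_fun this (uR P m)).trans ?_
    exact congrArg b (counit_uR P m)
  · intro m
    change TensorProduct.map LinearMap.id P.comul (TensorProduct.map g b (uR P m)) =
      TensorProduct.map (TensorProduct.lift P.mul) LinearMap.id
          (TensorProduct.tensorTensorTensorComm k H H H H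
            (TensorProduct.map (TensorProduct.map g b ∘ₗ uR P) (TensorProduct.map g b ∘ₗ uR P)
              (P.comul m)))
    have l1 : TensorProduct.map LinearMap.id P.comul ∘ₗ TensorProduct.map g b =
        TensorProduct.map g (TensorProduct.map (b ∘ₗ b) (b ∘ₗ b)) ∘ₗ
          TensorProduct.map LinearMap.id (uComul P) := by
      rw [← TensorProduct.map_comp, ← TensorProduct.map_comp, hΔb, hΔ,
        ← LinearMap.comp_assoc, ← TensorProduct.map_comp]
      rfl
    have l2 : TensorProduct.map (TensorProduct.map g b ∘ₗ uR P) (TensorProduct.map g b ∘ₗ uR P)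
        ∘ₗ P.comul = TensorProduct.map (TensorProduct.map (g ∘ₗ b) (b ∘ₗ b))
          (TensorProduct.map (g ∘ₗ b) (b ∘ₗ b)) ∘ₗ TensorProduct.map (uR P) (uR P) ∘ₗ uComul P := by
      rw [hΔ, ← LinearMap.comp_assoc, ← TensorProduct.map_comp, ← LinearMap.comp_assoc,
        ← TensorProduct.map_comp, LinearMap.comp_assoc, hbr, ← LinearMap.comp_assoc,
        ← TensorProduct.map_comp]
    have l3 : TensorProduct.map (TensorProduct.lift P.mul) LinearMap.id ∘ₗ
        (TensorProduct.tensorTensorTensorComm k H H H H).toLinearMap ∘ₗ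
        TensorProduct.map (TensorProduct.map (g ∘ₗ b) (b ∘ₗ b))
          (TensorProduct.map (g ∘ₗ b) (b ∘ₗ b)) =
        TensorProduct.map g (TensorProduct.map (b ∘ₗ b) (b ∘ₗ b)) ∘ₗ
        TensorProduct.map (TensorProduct.lift (uMul P)) LinearMap.id ∘ₗ
        (TensorProduct.tensorTensorTensorComm k H H H H).toLinearMap := by
      ext x y z w
      simp [uMul_apply, g, b, symm_mul, hγ.mul]
    have a1 := LinearMap.congr_fun l1 (uR P m)
    have a2 := LinearMap.congr_fun l2 m
    have a3 := LinearMap.congr_fun l3 (TensorProduct.map (uR P) (uR P) (uComul P m))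
    have a4 := LinearMap.congr_fun (uR_comul P) m
    refine a1.trans ?_
    refine Eq.trans ?_ (congrArg (fun z => TensorProduct.map (TensorProduct.lift P.mul) LinearMap.id
          (TensorProduct.tensorTensorTensorComm k H H H H z)) a2.symm)
    refine Eq.trans ?_ a3.symm
    exact congrArg _ a4
  · intro m
    change TensorProduct.rid k H (TensorProduct.map LinearMap.id P.counit
      (TensorProduct.map g b (uR P m))) = P.counit m • P.one
    rw [← LinearMap.comp_apply, ← TensorProduct.map_comp, hεb]
    have : (TensorProduct.rid k H).toLinearMap ∘ₗ
        TensorProduct.map (LinearMap.id ∘ₗ g) P.counit =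
        g ∘ₗ (TensorProduct.rid k H).toLinearMap ∘ₗ TensorProduct.map LinearMap.id P.counit := by
      ext; simp
    refine (LinearMap.congr_fun this (uR P m)).trans ?_
    refine (congrArg g (uR_counit P m)).trans ?_
    simp [g, hγ.one]

/-- the opposite Hom-Hopf algebra, with antipode the inverse of the antipode -/
noncomputable def opHopf (HH : HomHopf k H) (Sinv : H →ₗ[k] H)
    (hS₁ : ∀ h, Sinv (HH.S h) = h) (hS₂ : ∀ h, HH.S (Sinv h) = h) : HomHopf k H where
  mul := HH.mul.flip
  one := HH.one
  str := HH.str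
  hom_assoc a b c := (HH.hom_assoc c b a).symm
  mul_one := HH.one_mul
  one_mul := HH.mul_one
  str_mul a b := HH.str_mul b a
  str_one := HH.str_one
  comul := HH.comul
  counit := HH.counit
  hom_coassoc := HH.hom_coassoc
  counit_comul_right := HH.counit_comul_right
  counit_comul_left := HH.counit_comul_left
  comul_str := HH.comul_str
  counit_str := HH.counit_str
  comul_mul a b := by
    have : TensorProduct.map (TensorProduct.lift HH.mul.flip) (TensorProduct.lift HH.mul.flip) ∘ₗ
        (TensorProduct.tensorTensorTensorComm k H H H H).toLinearMap ∘ₗ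
        (TensorProduct.comm k (H ⊗[k] H) (H ⊗[k] H)).toLinearMap =
        TensorProduct.map (TensorProduct.lift HH.mul) (TensorProduct.lift HH.mul) ∘ₗ
        (TensorProduct.tensorTensorTensorComm k H H H H).toLinearMap := by
      ext; simp
    exact (HH.comul_mul b a).trans (LinearMap.congr_fun this (HH.comul b ⊗ₜ HH.comul a)).symm
  comul_one := HH.comul_one
  counit_mul a b := (HH.counit_mul b a).trans (mul_comm _ _)
  counit_one := HH.counit_one
  S := Sinv
  S_str h := by rw [← hS₁ (HH.str (Sinv h)), ← HH.S_str, hS₂]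
  S_mul_left h := by
    have hinj : Function.Injective HH.S := Function.LeftInverse.injective hS₁
    have S1 : HH.S HH.one = HH.one := by
      have := HH.S_mul_left HH.one
      rw [HH.comul_one, HH.counit_one] at this
      simp only [TensorProduct.map_tmul, TensorProduct.lift.tmul, LinearMap.id_apply, HH.mul_one,
        one_smul] at this
      apply HH.str.injective
      rw [this, HH.str_one]
    apply hinj
    have : HH.S ∘ₗ TensorProduct.lift HH.mul.flip ∘ₗ TensorProduct.map Sinv LinearMap.id =
        TensorProduct.lift HH.mul ∘ₗ TensorProduct.map LinearMap.id HH.S := by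
      ext x y
      simp [S_antimul, hS₂]
    refine (LinearMap.congr_fun this (HH.comul h)).trans ?_
    refine (HH.S_mul_right h).trans ?_
    simp [S1]
  S_mul_right h := by
    have hinj : Function.Injective HH.S := Function.LeftInverse.injective hS₁
    have S1 : HH.S HH.one = HH.one := by
      have := HH.S_mul_left HH.one
      rw [HH.comul_one, HH.counit_one] at this
      simp only [TensorProduct.map_tmul, TensorProduct.lift.tmul, LinearMap.id_apply, HH.mul_one,
        one_smul] at this
      apply HH.str.injective
      rw [this, HH.str_one]
    apply hinj
    have : HH.S ∘ₗ TensorProduct.lift HH.mul.flip ∘ₗ TensorProduct.map LinearMap.id Sinv =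
        TensorProduct.lift HH.mul ∘ₗ TensorProduct.map HH.S LinearMap.id := by
      ext x y
      simp [S_antimul, hS₂]
    refine (LinearMap.congr_fun this (HH.comul h)).trans ?_
    refine (HH.S_mul_left h).trans ?_
    simp [S1]

end Final


/-- Let `(H, β)` be a monoidal Hom-Hopf algebra with bijective
antipode `S` and `n : ℤ`.  Then `H`, equipped with the coaction
`ρ(h) = βⁿ(S⁻¹(h₂₂)) · β^{n-1}(h₁) ⊗ β(h₂₁)` (product in `H`), is a left
`(H^op, β)`-Hom-comodule coalgebra, where `H^op` is `H` with the opposite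
multiplication and unchanged unit, comultiplication, counit and structure map. -/
theorem coaction_makes_left_op_comodule_coalgebra
    {k : Type*} [Field k] {H : Type*} [AddCommGroup H] [Module k H]
    (HH : HomHopf k H) (Sinv : H →ₗ[k] H)
    (hS₁ : ∀ h, Sinv (HH.S h) = h) (hS₂ : ∀ h, HH.S (Sinv h) = h) (n : ℤ) :
    ∃ HopB : HomBialg k H,
      HopB.mul = HH.mul.flip ∧ HopB.one = HH.one ∧
      HopB.comul = HH.comul ∧ HopB.counit = HH.counit ∧ HopB.str = HH.str ∧
      ∃ ρ : H →ₗ[k] H ⊗[k] H,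
        (∀ h, ρ h
          = TensorProduct.map
              (TensorProduct.lift HH.mul ∘ₗ
                TensorProduct.map ((HH.str ^ n).toLinearMap ∘ₗ Sinv)
                  (HH.str ^ (n - 1)).toLinearMap ∘ₗ
                (TensorProduct.comm k H H).toLinearMap)
              HH.str.toLinearMap
              ((TensorProduct.assoc k H H H).symm
                (TensorProduct.map LinearMap.id (TensorProduct.comm k H H).toLinearMap
                  (TensorProduct.map LinearMap.id HH.comul (HH.comul h))))) ∧
        IsLeftHomComoduleCoalg HopB HH.toHomCoalg ρ := by
  set P := opHopf HH Sinv hS₁ hS₂ with hP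
  have hγ : HomAuto P (HH.str ^ (n - 1)) := homAuto_zpow P (n - 1)
  refine ⟨P.toHomBialg, rfl, rfl, rfl, rfl, rfl, _, ?_,
    twisted_coaction P (HH.str ^ (n - 1)) hγ⟩
  intro h
  set γ := HH.str ^ (n - 1) with hγd
  have hn : HH.str ^ n = γ * HH.str := by
    rw [hγd, ← zpow_add_one, sub_add_cancel]
  have e1 : uComul P h = TensorProduct.map HH.str.toLinearMap HH.str.toLinearMap (HH.comul h) :=
    uComul_str P h
  have hΔ : uComul P ∘ₗ HH.str.toLinearMap = TensorProduct.map
      (HH.str.toLinearMap ∘ₗ HH.str.toLinearMap) (HH.str.toLinearMap ∘ₗ HH.str.toLinearMap) ∘ₗ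
      HH.comul := by
    ext x
    refine (uComul_str P (HH.str x)).trans ?_
    refine (congrArg _ (HH.comul_str x)).trans ?_
    rw [← LinearMap.comp_apply (TensorProduct.map _ _), TensorProduct.map_comp]
    rfl
  have e2 : TensorProduct.map LinearMap.id (uComul P) (uComul P h) =
      TensorProduct.map HH.str.toLinearMap (TensorProduct.map
      (HH.str.toLinearMap ∘ₗ HH.str.toLinearMap) (HH.str.toLinearMap ∘ₗ HH.str.toLinearMap))
      (TensorProduct.map LinearMap.id HH.comul (HH.comul h)) := by
    rw [e1]
    have : TensorProduct.map LinearMap.id (uComul P) ∘ₗ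
        TensorProduct.map HH.str.toLinearMap HH.str.toLinearMap =
        TensorProduct.map HH.str.toLinearMap (TensorProduct.map
        (HH.str.toLinearMap ∘ₗ HH.str.toLinearMap) (HH.str.toLinearMap ∘ₗ HH.str.toLinearMap)) ∘ₗ
        TensorProduct.map LinearMap.id HH.comul := by
      rw [← TensorProduct.map_comp, ← TensorProduct.map_comp, hΔ]
      rfl
    exact LinearMap.congr_fun this (HH.comul h)
  have hsy : ∀ x, Sinv (HH.str x) = HH.str (Sinv x) := fun x => (P.S_str x).symm
  have e3 : (TensorProduct.map γ.toLinearMap HH.str.symm.toLinearMap ∘ₗ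
      TensorProduct.map (TensorProduct.lift (uMul P) ∘ₗ TensorProduct.map LinearMap.id Sinv) LinearMap.id
      ∘ₗ (TensorProduct.assoc k H H H).symm.toLinearMap
      ∘ₗ TensorProduct.map LinearMap.id (TensorProduct.comm k H H).toLinearMap) ∘ₗ
      TensorProduct.map HH.str.toLinearMap (TensorProduct.map
      (HH.str.toLinearMap ∘ₗ HH.str.toLinearMap) (HH.str.toLinearMap ∘ₗ HH.str.toLinearMap)) =
      TensorProduct.map
              (TensorProduct.lift HH.mul ∘ₗ
                TensorProduct.map ((HH.str ^ n).toLinearMap ∘ₗ Sinv)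
                  γ.toLinearMap ∘ₗ
                (TensorProduct.comm k H H).toLinearMap)
              HH.str.toLinearMap ∘ₗ
              (TensorProduct.assoc k H H H).symm.toLinearMap ∘ₗ
                TensorProduct.map LinearMap.id (TensorProduct.comm k H H).toLinearMap := by
    ext x y z
    have hm : γ (uMul P (HH.str x) (HH.str (HH.str (Sinv z)))) =
        HH.mul (γ (HH.str (Sinv z))) (γ x) := by
      have : uMul P (HH.str x) (HH.str (HH.str (Sinv z))) = HH.mul (HH.str (Sinv z)) x := by
        change HH.str.symm (HH.mul (HH.str (HH.str (Sinv z))) (HH.str x)) = _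
        rw [symm_mul]
        simp
      rw [this]
      exact hγ.mul x (HH.str (Sinv z))
    simp [hn, hsy, LinearEquiv.mul_apply, hm]
  have a3 := LinearMap.congr_fun e3 (TensorProduct.map LinearMap.id HH.comul (HH.comul h))
  refine Eq.trans ?_ a3
  refine (congrArg (TensorProduct.map γ.toLinearMap HH.str.symm.toLinearMap ∘ₗ
      TensorProduct.map (TensorProduct.lift (uMul P) ∘ₗ TensorProduct.map LinearMap.id Sinv) LinearMap.id
      ∘ₗ (TensorProduct.assoc k H H H).symm.toLinearMap
      ∘ₗ TensorProduct.map LinearMap.id (TensorProduct.comm k H H).toLinearMap) e2)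
end

section
/- Let (H, β, ζ) be a coquasitriangular monoidal Hom-Hopf algebra. Then the bilinear form σ : H ⊗ H → k defined by σ(h, g) = ζ(g, h) is a left monoidal Hom-2-cocycle on (H, β): σ(β(h), β(g)) = σ(h, g) and σ(h_1, g_1)σ(h_2g_2, k) = σ(g_1, k_1)σ(h, g_2k_2) for all h, g, k ∈ H. -/
open TensorProduct

/-- If `(H, β, ζ)` is a coquasitriangular monoidal Hom-Hopf algebra,
then `σ(h, g) := ζ(g, h)` is a left monoidal Hom-2-cocycle on `(H, β)`. -/
theorem coquasitriangular_flip_is_left_two_cocycle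
    {k : Type*} [Field k] {H : Type*} [AddCommGroup H] [Module k H]
    (P : HomHopf k H) (ζ ζi : H →ₗ[k] H →ₗ[k] k)
    (hcq : IsCoquasitriangular P.toHomBialg ζ ζi) :
    IsLeftHom2Cocycle P.toHomBialg ζ.flip := by
  obtain ⟨-, -, h1, h2, h3, h4⟩ := hcq
  refine ⟨fun h g => by simpa using h1 g h, fun h g c => ?_⟩
  have key := congrArg (ζ c) (h2 g h)
  have e3 : ∀ a b, ζ c (P.mul a b) = TensorProduct.lid k k
      (TensorProduct.map (ζ.flip a) (ζ.flip b) (P.comul c)) := by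
    intro a b
    have := h3 (P.str c) a b
    rw [LinearEquiv.symm_apply_apply, P.comul_str, TensorProduct.map_map] at this
    rw [this]
    congr 3 <;> ext x <;> simp [h1]
  have e4 : ∀ a b, ζ (P.mul a b) h = TensorProduct.lid k k
      (TensorProduct.map (ζ a) (ζ b) (TensorProduct.comm k H H (P.comul h))) := by
    intro a b
    have := h4 a b (P.str h)
    rw [LinearEquiv.symm_apply_apply, P.comul_str, TensorProduct.map_comm,
      TensorProduct.map_map] at this
    rw [this]
    rw [TensorProduct.map_comm]
    congr 3 <;> ext x <;> simp [h1]
  obtain ⟨sc, hc⟩ := TensorProduct.exists_finset (P.comul c)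
  obtain ⟨sg, hg⟩ := TensorProduct.exists_finset (P.comul g)
  obtain ⟨sh, hh⟩ := TensorProduct.exists_finset (P.comul h)
  rw [hc] at e3
  rw [hh] at e4
  rw [hg, hh] at key
  rw [hc, hg, hh]
  simp only [map_sum, TensorProduct.sum_tmul, TensorProduct.tmul_sum, TensorProduct.map_tmul,
    TensorProduct.tensorTensorTensorComm_tmul, TensorProduct.lid_tmul, TensorProduct.rid_tmul,
    TensorProduct.lift.tmul, LinearMap.comp_apply, LinearEquiv.coe_coe, TensorProduct.comm_tmul,
    LinearMap.flip_apply, map_smul, smul_eq_mul, e3, e4, Finset.mul_sum] at key ⊢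
  rw [Finset.sum_comm, key, Finset.sum_comm, Finset.sum_comm (s := sc)]
  refine Finset.sum_congr rfl fun x _ => ?_
  rw [Finset.sum_comm]
  refine Finset.sum_congr rfl fun y _ => Finset.sum_congr rfl fun z _ => ?_
  ring
end

section
/- Let (H, β, ζ) be a coquasitriangular monoidal Hom-Hopf algebra. Then ζ itself is a right monoidal Hom-2-cocycle on (H, β): ζ(β(h), β(g)) = ζ(h, g) and ζ(h_1g_1, k)ζ(h_2, g_2) = ζ(h, g_1k_1)ζ(g_2, k_2) for all h, g, k ∈ H. -/
open TensorProduct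

/-- If `(H, β, ζ)` is a coquasitriangular monoidal Hom-Hopf algebra,
then `ζ` itself is a right monoidal Hom-2-cocycle on `(H, β)`. -/
theorem coquasitriangular_is_right_two_cocycle
    {k : Type*} [Field k] {H : Type*} [AddCommGroup H] [Module k H]
    (P : HomHopf k H) (ζ ζi : H →ₗ[k] H →ₗ[k] k)
    (hcq : IsCoquasitriangular P.toHomBialg ζ ζi) :
    IsRightHom2Cocycle P.toHomBialg ζ := by
  obtain ⟨-, -, h51, h52, h53, h54⟩ := hcq
  have h3 : ∀ h g c, ζ h (P.mul g c) = TensorProduct.lid k k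
      (TensorProduct.map (ζ.flip g) (ζ.flip c) (P.comul h)) := by
    intro h g c
    have e := h53 (P.str h) g c
    rw [LinearEquiv.symm_apply_apply, P.comul_str] at e
    rw [e]
    generalize P.comul h = x
    induction x using TensorProduct.induction_on with
    | zero => simp
    | tmul a b => simp [h51]
    | add x y hx hy => simp only [map_add, hx, hy]
  have h4 : ∀ h g c, ζ (P.mul h g) c = TensorProduct.lid k k
      (TensorProduct.map (ζ g) (ζ h) (P.comul c)) := by
    intro h g c
    have e := h54 h g (P.str c)
    rw [LinearEquiv.symm_apply_apply, P.comul_str] at e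
    rw [e]
    generalize P.comul c = x
    induction x using TensorProduct.induction_on with
    | zero => simp
    | tmul a b => simp [h51, mul_comm]
    | add x y hx hy => simp only [map_add, hx, hy]
  refine ⟨h51, fun h g c => ?_⟩
  have e := congrArg (ζ h) (h52 g c)
  -- the right-hand side is the image of the right-hand side of (5.2) under `ζ h`
  have hR : ∀ w : (H ⊗[k] H) ⊗[k] (H ⊗[k] H),
      ζ h (TensorProduct.rid k H
        (TensorProduct.map (TensorProduct.lift P.mul) (TensorProduct.lift ζ) w))
      = TensorProduct.lid k k
        (TensorProduct.map (ζ h ∘ₗ TensorProduct.lift P.mul) (TensorProduct.lift ζ) w) := by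
    intro w
    induction w using TensorProduct.induction_on with
    | zero => simp
    | tmul a b => simp [mul_comm]
    | add x y hx hy => simp only [map_add, hx, hy]
  rw [← hR, ← e]
  -- expand `ζ (h₁ g₁, c)` and `ζ (h, c₂ g₂)`
  have key : ∀ x y z : H ⊗[k] H,
      (∀ u v, ζ (P.mul u v) c = TensorProduct.lid k k (TensorProduct.map (ζ v) (ζ u) z)) →
      (∀ u v, ζ h (P.mul u v) =
        TensorProduct.lid k k (TensorProduct.map (ζ.flip u) (ζ.flip v) x)) →
      TensorProduct.lid k k
        (TensorProduct.map (ζ.flip c ∘ₗ TensorProduct.lift P.mul) (TensorProduct.lift ζ)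
          (TensorProduct.tensorTensorTensorComm k H H H H (x ⊗ₜ[k] y)))
      = ζ h (TensorProduct.lid k H
        (TensorProduct.map (TensorProduct.lift ζ)
          (TensorProduct.lift P.mul ∘ₗ (TensorProduct.comm k H H).toLinearMap)
          (TensorProduct.tensorTensorTensorComm k H H H H (y ⊗ₜ[k] z)))) := by
    intro x y z hz hx
    obtain ⟨X, rfl⟩ := TensorProduct.exists_finset x
    obtain ⟨Y, rfl⟩ := TensorProduct.exists_finset y
    obtain ⟨Z, rfl⟩ := TensorProduct.exists_finset z
    simp only [TensorProduct.sum_tmul, TensorProduct.tmul_sum, map_sum,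
      TensorProduct.tensorTensorTensorComm_tmul, TensorProduct.map_tmul, LinearMap.comp_apply,
      TensorProduct.lift.tmul, LinearMap.flip_apply, LinearEquiv.coe_coe, TensorProduct.comm_tmul,
      TensorProduct.lid_tmul, map_smul, smul_eq_mul, hz, hx, Finset.mul_sum]
    rw [Finset.sum_comm (s := Z)]
    refine Finset.sum_congr rfl fun b _ => ?_
    rw [Finset.sum_comm]
    refine Finset.sum_congr rfl fun d _ => Finset.sum_congr rfl fun a _ => ?_
    ring
  exact key _ _ _ (fun u v => h4 u v c) (fun u v => h3 h u v)
end
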